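/- Let 0 < s' ≤ s and let Ω ⊆ ℝⁿ be a convex open set. Then F^s(Ω) ⊆ F^{s'}(Ω), and for every F ∈ F^s(Ω) one has ‖F‖_{Ḟ^{s'}(Ω)} ≤ max{‖F‖_{Ḟ^s(Ω)}, ‖F‖_{L^∞(Ω)}}. -/

import Mathlib

open Set ENNReal
open scoped NNReal

noncomputable section

/-- The largest integer strictly less than `s` (for `s > 0`). -/
def lowFloor (s : ℝ) : ℕ := ⌈s⌉₊ - 1

variable {E : Type*} [NormedAddCommGroup E] [NormedSpace ℝ E]

/-- `max_{0 ≤ m < s} sup_{x ∈ Ω} |∇^m F(x)|`, valued in `ℝ≥0∞`. -/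
def derivSup (s : ℝ) (Ω : Set E) (F : E → ℝ) : ℝ≥0∞ :=
  ⨆ (m : ℕ) (_ : m ≤ lowFloor s) (x : E) (_ : x ∈ Ω),
    (‖iteratedFDerivWithin ℝ m F Ω x‖₊ : ℝ≥0∞)

/-- The homogeneous Hölder seminorm `‖F‖_{Ċ^s(Ω)}`, valued in `ℝ≥0∞`. -/
def holderSemi (s : ℝ) (Ω : Set E) (F : E → ℝ) : ℝ≥0∞ :=
  ⨆ (x : E) (_ : x ∈ Ω) (y : E) (_ : y ∈ Ω) (_ : x ≠ y),
    (‖iteratedFDerivWithin ℝ (lowFloor s) F Ω x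
        - iteratedFDerivWithin ℝ (lowFloor s) F Ω y‖₊ : ℝ≥0∞)
      / ENNReal.ofReal (‖x - y‖ ^ (s - (lowFloor s : ℝ)))

/-- The Hölder norm `‖F‖_{C^s(Ω)}`, valued in `ℝ≥0∞`. -/
def csNorm (s : ℝ) (Ω : Set E) (F : E → ℝ) : ℝ≥0∞ :=
  derivSup s Ω F + holderSemi s Ω F

/-- Membership in `C^s(Ω)`. -/
def MemCs (s : ℝ) (Ω : Set E) (F : E → ℝ) : Prop :=
  ContDiffOn ℝ (lowFloor s : ℕ∞) F Ω ∧ csNorm s Ω F ≠ ∞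

/-- The flat seminorm `‖F‖_{Ḟ^s(Ω)}`, valued in `ℝ≥0∞`.  (In `ℝ≥0∞` one has
`0/0 = 0` and `a/0 = ∞` for `a ≠ 0`, matching the paper's conventions; for
`0 < s < 1` the supremum is empty, hence `0`.) -/
def flatSemi (s : ℝ) (Ω : Set E) (F : E → ℝ) : ℝ≥0∞ :=
  ⨆ (m : ℕ) (_ : 1 ≤ m) (_ : m ≤ lowFloor s) (x : E) (_ : x ∈ Ω),
    ((‖iteratedFDerivWithin ℝ m F Ω x‖₊ : ℝ≥0∞) ^ s
      / ENNReal.ofReal (F x) ^ (s - (m : ℝ))) ^ (1 / (m : ℝ))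

/-- Membership in the cone `F^s(Ω)`. -/
def MemFs (s : ℝ) (Ω : Set E) (F : E → ℝ) : Prop :=
  MemCs s Ω F ∧ (∀ x ∈ Ω, 0 ≤ F x) ∧ flatSemi s Ω F ≠ ∞

/-- The norm `‖F‖_{F^s(Ω)} = ‖F‖_{C^s(Ω)} + ‖F‖_{Ḟ^s(Ω)}`. -/
def fsNorm (s : ℝ) (Ω : Set E) (F : E → ℝ) : ℝ≥0∞ :=
  csNorm s Ω F + flatSemi s Ω F

/-- `sup_{x ∈ Ω} |F(x)|`, valued in `ℝ≥0∞`. -/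
def supNormSet (Ω : Set E) (F : E → ℝ) : ℝ≥0∞ :=
  ⨆ (x : E) (_ : x ∈ Ω), (‖F x‖₊ : ℝ≥0∞)

/-- `P` is (the function given by) a polynomial of degree at most `D`. -/
def IsPolyDeg (D : ℕ) (P : E → ℝ) : Prop :=
  ContDiff ℝ (⊤ : ℕ∞) P ∧ ∀ x, iteratedFDeriv ℝ (D + 1) P x = 0

/-- The degree-`D` Taylor polynomial (jet) of `F` at `x`, as a function. -/
def jetAt (D : ℕ) (F : E → ℝ) (x : E) : E → ℝ :=
  fun y => ∑ m ∈ Finset.range (D + 1),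
    (iteratedFDeriv ℝ m F x fun _ => y - x) / m.factorial

/-- The degree-`D` Taylor polynomial of `F` at `x` using derivatives within `Ω`. -/
def jetWithinAt (D : ℕ) (F : E → ℝ) (Ω : Set E) (x : E) : E → ℝ :=
  fun y => ∑ m ∈ Finset.range (D + 1),
    (iteratedFDerivWithin ℝ m F Ω x fun _ => y - x) / m.factorial

/-- The pointwise flatness quantity `max_{1≤m<s} (|∇^m P(x)|^s / P(x)^{s-m})^{1/m}`. -/
def jetFlatAt (s : ℝ) (P : E → ℝ) (x : E) : ℝ≥0∞ :=
  ⨆ (m : ℕ) (_ : 1 ≤ m) (_ : m ≤ lowFloor s),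
    ((‖iteratedFDeriv ℝ m P x‖₊ : ℝ≥0∞) ^ s
      / ENNReal.ofReal (P x) ^ (s - (m : ℝ))) ^ (1 / (m : ℝ))

/-- The set `Γ(x₀, M)` of flat nonnegative jets. -/
def Gamma (s : ℝ) (x₀ : E) (M : ℝ) : Set (E → ℝ) :=
  {P | IsPolyDeg (lowFloor s) P ∧ 0 ≤ P x₀ ∧
    (∀ m ≤ lowFloor s, ‖iteratedFDeriv ℝ m P x₀‖ ≤ M) ∧
    jetFlatAt s P x₀ ≤ ENNReal.ofReal M}

/-- `‖P⃗‖_{J C^s(E)}` for a family of jets `P : E → (E → ℝ)`. -/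
def jetCNorm (s : ℝ) (Eset : Set E) (P : E → E → ℝ) : ℝ≥0∞ :=
  (⨆ (x : E) (_ : x ∈ Eset) (m : ℕ) (_ : m ≤ lowFloor s),
      (‖iteratedFDeriv ℝ m (P x) x‖₊ : ℝ≥0∞))
  + ⨆ (x : E) (_ : x ∈ Eset) (y : E) (_ : y ∈ Eset) (_ : x ≠ y)
      (m : ℕ) (_ : m ≤ lowFloor s),
      (‖iteratedFDeriv ℝ m (P x - P y) y‖₊ : ℝ≥0∞)
        / ENNReal.ofReal (‖x - y‖ ^ (s - (m : ℝ)))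

/-- `‖P⃗‖_{J Ḟ^s(E)}` for a family of jets. -/
def jetFlatNorm (s : ℝ) (Eset : Set E) (P : E → E → ℝ) : ℝ≥0∞ :=
  ⨆ (x : E) (_ : x ∈ Eset) (m : ℕ) (_ : 1 ≤ m) (_ : m ≤ lowFloor s),
    ((‖iteratedFDeriv ℝ m (P x) x‖₊ : ℝ≥0∞) ^ s
      / ENNReal.ofReal |P x x| ^ (s - (m : ℝ))) ^ (1 / (m : ℝ))

/-- `‖P⃗‖_{J F^s(E)}`. -/
def jetFsNorm (s : ℝ) (Eset : Set E) (P : E → E → ℝ) : ℝ≥0∞ :=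
  jetCNorm s Eset P + jetFlatNorm s Eset P

/-- The trace norm `‖f‖_{F^s(S)}` (with `inf ∅ = ∞`). -/
def traceNorm (s : ℝ) (S : Set E) (f : E → ℝ) : ℝ≥0∞ :=
  ⨅ (F : E → ℝ) (_ : MemFs s (univ : Set E) F ∧ ∀ x ∈ S, F x = f x),
    fsNorm s (univ : Set E) F


theorem lowFloor_mono {s s' : ℝ} (h : s' ≤ s) : lowFloor s' ≤ lowFloor s :=
  Nat.sub_le_sub_right (Nat.ceil_mono h) 1

theorem lowFloor_lt {s : ℝ} (hs : 0 < s) : (lowFloor s : ℝ) < s := by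
  have h : 0 < ⌈s⌉₊ := Nat.ceil_pos.2 hs
  exact Nat.lt_ceil.1 (Nat.sub_lt h one_pos)

theorem le_lowFloor_add_one (s : ℝ) : s ≤ lowFloor s + 1 := by
  have h : ⌈s⌉₊ ≤ lowFloor s + 1 := by unfold lowFloor; omega
  exact_mod_cast (Nat.le_ceil s).trans (Nat.cast_le.2 h)

theorem flat_interpolation_eq {d f : ℝ≥0∞} (hf0 : f ≠ 0) (hf : f ≠ ∞)
    {m s s' : ℝ} (hm : 0 < m) (hs' : 0 ≤ s') (hs : 0 < s) :
    (d ^ s' / f ^ (s' - m)) ^ (1 / m) =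
      ((d ^ s / f ^ (s - m)) ^ (1 / m)) ^ (s' / s) * f ^ (1 - s' / s) := by
  have hm' : 0 ≤ 1 / m := by positivity
  have hq : 0 ≤ s' / s := by positivity
  have key : d ^ (s * (1 / m) * (s' / s)) = d ^ (s' * (1 / m)) := by
    congr 1; field_simp
  rw [ENNReal.div_rpow_of_nonneg _ _ hm', ENNReal.div_rpow_of_nonneg _ _ hm',
    ENNReal.div_rpow_of_nonneg _ _ hq]
  simp only [← ENNReal.rpow_mul, key]
  rw [ENNReal.div_eq_inv_mul, ENNReal.div_eq_inv_mul, mul_right_comm,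
    ← ENNReal.rpow_neg, ← ENNReal.rpow_neg, ← ENNReal.rpow_add _ _ hf0 hf]
  congr 2
  field_simp
  ring

theorem flat_interpolation_le {d f : ℝ≥0∞} (hd : d ≠ ∞) (hf : f ≠ ∞)
    {m s s' : ℝ} (hm : 0 < m) (hms' : m < s') (hss : s' ≤ s)
    (htop : (d ^ s / f ^ (s - m)) ^ (1 / m) ≠ ∞) :
    (d ^ s' / f ^ (s' - m)) ^ (1 / m) ≤ max ((d ^ s / f ^ (s - m)) ^ (1 / m)) f := by
  have hs' : 0 < s' := hm.trans hms'
  have hs : 0 < s := hs'.trans_le hss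
  have hm' : 0 < 1 / m := by positivity
  rcases eq_or_ne f 0 with rfl | hf0
  · have hd0 : d = 0 := by
      by_contra hd0
      apply htop
      have : d ^ s ≠ 0 := by simp [hd0, hd]
      rw [ENNReal.zero_rpow_of_pos (by linarith), ENNReal.div_zero this,
        ENNReal.top_rpow_of_pos hm']
    simp [hd0, ENNReal.zero_rpow_of_pos hs', hm]
  · have hq : 0 ≤ s' / s := by positivity
    have hq1 : 0 ≤ 1 - s' / s := sub_nonneg.2 ((div_le_one hs).2 hss)
    rw [flat_interpolation_eq hf0 hf hm hs'.le hs]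
    set T := (d ^ s / f ^ (s - m)) ^ (1 / m)
    calc T ^ (s' / s) * f ^ (1 - s' / s)
        ≤ max T f ^ (s' / s) * max T f ^ (1 - s' / s) := by
          gcongr
          · exact le_max_left _ _
          · exact le_max_right _ _
      _ = max T f := by
          rw [← ENNReal.rpow_add_of_nonneg _ _ hq hq1, add_sub_cancel, ENNReal.rpow_one]

theorem le_max_mul_rpow {a A B r α θ : ℝ} (hr : 0 < r) (hα : 0 ≤ α) (hαθ : α ≤ θ)
    (hB : 0 ≤ B) (haA : a ≤ A) (haB : a ≤ B * r ^ θ) : a ≤ max A B * r ^ α := by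
  have hmax : 0 ≤ max A B := hB.trans (le_max_right _ _)
  rcases le_total r 1 with h | h
  · exact haB.trans (mul_le_mul (le_max_right _ _)
      (Real.rpow_le_rpow_of_exponent_ge hr h hαθ) (by positivity) hmax)
  · exact haA.trans ((le_max_left A B).trans
      (le_mul_of_one_le_right hmax (Real.one_le_rpow h hα)))

theorem norm_iteratedFDerivWithin_le_derivSup {s : ℝ} {Ω : Set E} {F : E → ℝ}
    (h : derivSup s Ω F ≠ ∞) {m : ℕ} (hm : m ≤ lowFloor s) {x : E} (hx : x ∈ Ω) :
    ‖iteratedFDerivWithin ℝ m F Ω x‖ ≤ (derivSup s Ω F).toReal := by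
  have key : (‖iteratedFDerivWithin ℝ m F Ω x‖₊ : ℝ≥0∞) ≤ derivSup s Ω F :=
    le_iSup₂_of_le m hm (le_iSup₂_of_le x hx le_rfl)
  simpa using ENNReal.toReal_mono h key

theorem norm_sub_le_holderSemi {s : ℝ} {Ω : Set E} {F : E → ℝ} (h : holderSemi s Ω F ≠ ∞)
    {x y : E} (hx : x ∈ Ω) (hy : y ∈ Ω) (hxy : x ≠ y) :
    ‖iteratedFDerivWithin ℝ (lowFloor s) F Ω x - iteratedFDerivWithin ℝ (lowFloor s) F Ω y‖ ≤
      (holderSemi s Ω F).toReal * ‖x - y‖ ^ (s - (lowFloor s : ℝ)) := by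
  have hpos : 0 < ‖x - y‖ ^ (s - (lowFloor s : ℝ)) :=
    Real.rpow_pos_of_pos (norm_pos_iff.2 (sub_ne_zero.2 hxy)) _
  have key : (‖iteratedFDerivWithin ℝ (lowFloor s) F Ω x
        - iteratedFDerivWithin ℝ (lowFloor s) F Ω y‖₊ : ℝ≥0∞)
      / ENNReal.ofReal (‖x - y‖ ^ (s - (lowFloor s : ℝ))) ≤ holderSemi s Ω F :=
    le_iSup₂_of_le x hx (le_iSup₂_of_le y hy (le_iSup_of_le hxy le_rfl))
  have := ENNReal.toReal_mono h key
  rw [ENNReal.toReal_div, ENNReal.toReal_ofReal hpos.le, div_le_iff₀ hpos] at this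
  simpa using this

theorem holderSemi_ne_top_of_le {s : ℝ} {Ω : Set E} {F : E → ℝ} {C : ℝ}
    (h : ∀ x ∈ Ω, ∀ y ∈ Ω, x ≠ y →
      ‖iteratedFDerivWithin ℝ (lowFloor s) F Ω x - iteratedFDerivWithin ℝ (lowFloor s) F Ω y‖ ≤
        C * ‖x - y‖ ^ (s - (lowFloor s : ℝ))) :
    holderSemi s Ω F ≠ ∞ := by
  refine ne_top_of_le_ne_top (ENNReal.ofReal_ne_top (r := C)) ?_
  refine iSup₂_le fun x hx => iSup₂_le fun y hy => iSup_le fun hxy => ?_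
  apply ENNReal.div_le_of_le_mul
  rw [← ENNReal.ofReal_mul' (by positivity), ← enorm_eq_nnnorm, ← ofReal_norm]
  exact ENNReal.ofReal_le_ofReal (h x hx y hy hxy)

theorem norm_iteratedFDerivWithin_sub_le {s : ℝ} {Ω : Set E} (hc : Convex ℝ Ω)
    (ho : IsOpen Ω) {F : E → ℝ} (hF : ContDiffOn ℝ (lowFloor s : ℕ∞) F Ω)
    (h : derivSup s Ω F ≠ ∞) {k : ℕ} (hk : k < lowFloor s) {x y : E} (hx : x ∈ Ω) (hy : y ∈ Ω) :
    ‖iteratedFDerivWithin ℝ k F Ω x - iteratedFDerivWithin ℝ k F Ω y‖ ≤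
      (derivSup s Ω F).toReal * ‖x - y‖ := by
  refine hc.norm_image_sub_le_of_norm_fderivWithin_le (𝕜 := ℝ)
    (hF.differentiableOn_iteratedFDerivWithin (by exact_mod_cast hk) ho.uniqueDiffOn)
    (fun z hz => ?_) hy hx
  rw [norm_fderivWithin_iteratedFDerivWithin]
  exact norm_iteratedFDerivWithin_le_derivSup h hk hz

theorem MemCs.of_le {s s' : ℝ} (hs' : 0 < s') (hss : s' ≤ s) {Ω : Set E} (hc : Convex ℝ Ω)
    (ho : IsOpen Ω) {F : E → ℝ} (hF : MemCs s Ω F) : MemCs s' Ω F := by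
  obtain ⟨hdiff, hnorm⟩ := hF
  obtain ⟨hD, hH⟩ := ENNReal.add_ne_top.1 hnorm
  have hfloor := lowFloor_mono hss
  have hα : 0 ≤ s' - lowFloor s' := sub_nonneg.2 (lowFloor_lt hs').le
  have hDle : derivSup s' Ω F ≤ derivSup s Ω F :=
    iSup₂_le fun m hm => le_iSup₂_of_le m (hm.trans hfloor) le_rfl
  refine ⟨hdiff.of_le (by exact_mod_cast hfloor),
    ENNReal.add_ne_top.2 ⟨ne_top_of_le_ne_top hD hDle, ?_⟩⟩
  have hbdd : ∀ x ∈ Ω, ∀ y ∈ Ω, ‖iteratedFDerivWithin ℝ (lowFloor s') F Ω x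
      - iteratedFDerivWithin ℝ (lowFloor s') F Ω y‖ ≤
        (derivSup s Ω F).toReal + (derivSup s Ω F).toReal := fun x hx y hy =>
    (norm_sub_le _ _).trans (add_le_add (norm_iteratedFDerivWithin_le_derivSup hD hfloor hx)
      (norm_iteratedFDerivWithin_le_derivSup hD hfloor hy))
  rcases hfloor.lt_or_eq with hlt | heq
  · refine holderSemi_ne_top_of_le fun x hx y hy hxy =>
      le_max_mul_rpow (θ := 1) (B := (derivSup s Ω F).toReal)
        (norm_pos_iff.2 (sub_ne_zero.2 hxy)) hα
        (sub_le_iff_le_add'.2 (le_lowFloor_add_one s')) ENNReal.toReal_nonneg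
        (hbdd x hx y hy) ?_
    rw [Real.rpow_one]
    exact norm_iteratedFDerivWithin_sub_le hc ho hdiff hD hlt hx hy
  · refine holderSemi_ne_top_of_le fun x hx y hy hxy =>
      le_max_mul_rpow (B := (holderSemi s Ω F).toReal)
        (norm_pos_iff.2 (sub_ne_zero.2 hxy)) hα
        (sub_le_sub_right hss _) ENNReal.toReal_nonneg (hbdd x hx y hy) ?_
    rw [heq]
    exact norm_sub_le_holderSemi hH hx hy hxy

theorem flatSemi_le_max {s s' : ℝ} (hs' : 0 < s') (hss : s' ≤ s) {Ω : Set E} {F : E → ℝ}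
    (hflat : flatSemi s Ω F ≠ ∞) :
    flatSemi s' Ω F ≤ max (flatSemi s Ω F) (supNormSet Ω F) := by
  refine iSup₂_le fun m hm => iSup₂_le fun hms' x => iSup_le fun hx => ?_
  have hle : ((‖iteratedFDerivWithin ℝ m F Ω x‖₊ : ℝ≥0∞) ^ s
      / ENNReal.ofReal (F x) ^ (s - (m : ℝ))) ^ (1 / (m : ℝ)) ≤ flatSemi s Ω F :=
    le_iSup₂_of_le m hm (le_iSup₂_of_le (hms'.trans (lowFloor_mono hss)) x
      (le_iSup_of_le hx le_rfl))
  have hlt : (m : ℝ) < s' := (Nat.cast_le.2 hms').trans_lt (lowFloor_lt hs')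
  refine (flat_interpolation_le ENNReal.coe_ne_top ENNReal.ofReal_ne_top
    (Nat.cast_pos.2 hm) hlt hss (ne_top_of_le_ne_top hflat hle)).trans (max_le_max hle ?_)
  refine le_trans ?_ (le_iSup₂_of_le x hx le_rfl)
  rw [← enorm_eq_nnnorm, ← ofReal_norm]
  exact ENNReal.ofReal_le_ofReal (Real.le_norm_self _)

theorem supNormSet_le_derivSup (s : ℝ) (Ω : Set E) (F : E → ℝ) :
    supNormSet Ω F ≤ derivSup s Ω F := by
  refine iSup₂_le fun x hx => le_iSup₂_of_le 0 (Nat.zero_le _) (le_iSup₂_of_le x hx ?_)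
  simp only [← enorm_eq_nnnorm, ← ofReal_norm, norm_iteratedFDerivWithin_zero]
  exact le_rfl

/-- Proposition `Fs basic`(B): if `0 < s' ≤ s` then
`F^s(Ω) ⊆ F^{s'}(Ω)` and `‖F‖_{Ḟ^{s'}(Ω)} ≤ max {‖F‖_{Ḟ^s(Ω)}, ‖F‖_{L^∞(Ω)}}`. -/
theorem statement2 (n : ℕ) (hn : 1 ≤ n) (s s' : ℝ) (hs' : 0 < s') (hss : s' ≤ s) :
    ∀ (Ω : Set (EuclideanSpace ℝ (Fin n))), Convex ℝ Ω → IsOpen Ω →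
    ∀ F : EuclideanSpace ℝ (Fin n) → ℝ, MemFs s Ω F →
      MemFs s' Ω F ∧
      flatSemi s' Ω F ≤ max (flatSemi s Ω F) (supNormSet Ω F) := by
  intro Ω hc ho F hF
  obtain ⟨hC, hpos, hflat⟩ := hF
  have hle := flatSemi_le_max hs' hss hflat
  have hsup : supNormSet Ω F ≠ ∞ :=
    ne_top_of_le_ne_top (ENNReal.add_ne_top.1 hC.2).1 (supNormSet_le_derivSup s Ω F)
  have hmax : max (flatSemi s Ω F) (supNormSet Ω F) ≠ ∞ := by
    simp [hflat, hsup]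
  exact ⟨⟨hC.of_le hs' hss hc ho, hpos, ne_top_of_le_ne_top hmax hle⟩, hle⟩

end
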